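/- Let A, B, and C be groups with B a subgroup of A, and let P = A *_B (B × C) be the amalgamated free product of A and B × C over B, amalgamated along the inclusion B → A and the homomorphism B → B × C sending b to (b,1). Then the natural homomorphism P → A (induced by the identity on A and by the map B × C → A sending (b,c) to b) is a split surjection, and its kernel is isomorphic to the free product of a family of copies of C indexed by the coset space A/B. In particular, P is a semidirect product of a normal subgroup isomorphic to the free product of [A : B] copies of C by a complement isomorphic to A. -/

import Mathlib

/-!
Let `N` be the free product of copies of `C` indexed by `A ⧸ B`.  The group `A` acts on `N` by
permuting the copies through left translation of cosets, and the pushout `P = A *_B (B × C)` is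
the semidirect product `N ⋊ A`, compatibly with the projections onto `A`.

The homomorphism `toSemi : P → N ⋊ A` is the inclusion on `A` and sends `(b, c)` to
`(c in the copy at the trivial coset) * b`; it respects the amalgamation because `B` fixes the
trivial coset.  In the other direction `fromFree : N → P` sends the copy of `C` at the coset `aB`
to the conjugate of `C` by `a`; this depends only on the coset because `B` and `C` commute in `P`
(`fromFree_of_mk`), and it is equivariant (`fromFree_perm`).  The identity `toSemi_fromFree` makes
`fromFree` injective, and the factorisation `fromFree_mul_inclA`, which writes every `x : P` as an
element of the image of `fromFree` times an element of `A`, shows that its image is `ker π`.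
-/

open Monoid

section

variable (A C : Type) [Group A] [Group C] (B : Subgroup A)

/-- The two-element family of groups `A` and `B × C` (indexed by `Bool`). -/
def PushFam : Bool → Type
  | false => A
  | true => ↥B × C

instance PushFam.instGroup : ∀ b : Bool, Group (PushFam A C B b)
  | false => inferInstanceAs (Group A)
  | true => inferInstanceAs (Group (↥B × C))

/-- The diagram of amalgamation maps: the inclusion `B → A` and the homomorphism
`b ↦ (b, 1) : B → B × C`. -/
def pushMaps : ∀ b : Bool, ↥B →* PushFam A C B b
  | false => B.subtype
  | true => MonoidHom.inl ↥B C

end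

namespace PushSplit

variable {A C : Type} [Group A] [Group C] (B : Subgroup A)

/-- The free product of copies of `C` indexed by the coset space `A ⧸ B`. -/
abbrev Free (C : Type) [Group C] (B : Subgroup A) : Type := CoprodI (fun _ : A ⧸ B => C)

/-- The inclusion of the copy of `C` at the coset `q`. -/
def ofFree (q : A ⧸ B) : C →* Free C B := CoprodI.of (M := fun _ : A ⧸ B => C) (i := q)

/-- The endomorphism of the free product translating the index of each copy of `C` by `a`. -/
def permHom (a : A) : Free C B →* Free C B := CoprodI.lift fun q => ofFree B (a • q)

@[simp]
lemma permHom_of (a : A) (q : A ⧸ B) (c : C) :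
    permHom B a (ofFree B q c) = ofFree B (a • q) c :=
  CoprodI.lift_of _ _

lemma permHom_permHom (a b : A) (n : Free C B) :
    permHom B a (permHom B b n) = permHom B (a * b) n := by
  have h : (permHom (C := C) B a).comp (permHom B b) = permHom B (a * b) :=
    CoprodI.ext_hom _ _ fun q => MonoidHom.ext fun c => by
      change permHom B a (permHom B b (ofFree B q c)) = permHom B (a * b) (ofFree B q c)
      simp [mul_smul]
  exact DFunLike.congr_fun h n

lemma permHom_one (n : Free C B) : permHom B (1 : A) n = n := by
  have h : permHom (C := C) B (1 : A) = MonoidHom.id _ :=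
    CoprodI.ext_hom _ _ fun q => MonoidHom.ext fun c => by
      change permHom B 1 (ofFree B q c) = ofFree B q c
      simp
  exact DFunLike.congr_fun h n

/-- The action of `A` on the free product by permutation of the copies of `C`. -/
def perm : A →* MulAut (Free C B) where
  toFun a :=
    { toFun := permHom B a
      invFun := permHom B a⁻¹
      left_inv := fun n => by rw [permHom_permHom, inv_mul_cancel, permHom_one]
      right_inv := fun n => by rw [permHom_permHom, mul_inv_cancel, permHom_one]
      map_mul' := map_mul _ }
  map_one' := MulEquiv.ext fun n => permHom_one B n
  map_mul' a b := MulEquiv.ext fun n => (permHom_permHom B a b n).symm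

@[simp]
lemma perm_of (a : A) (q : A ⧸ B) (c : C) :
    perm B a (ofFree B q c) = ofFree B (a • q) c :=
  permHom_of B a q c

/-- The pushout `A *_B (B × C)`. -/
abbrev P (C : Type) [Group C] (B : Subgroup A) : Type := PushoutI (pushMaps A C B)

/-- The canonical map `A → P`. -/
def inclA : A →* P C B := PushoutI.of (φ := pushMaps A C B) false

/-- The canonical map `B × C → P`. -/
def inclBC : ↥B × C →* P C B := PushoutI.of (φ := pushMaps A C B) true

lemma inclA_coe (b : B) : inclA (C := C) B (b : A) = inclBC B (b, 1) :=
  (PushoutI.of_apply_eq_base (pushMaps A C B) false b).trans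
    (PushoutI.of_apply_eq_base (pushMaps A C B) true b).symm

lemma commute_inclA_inclBC (b : B) (c : C) :
    Commute (inclA (C := C) B (b : A)) (inclBC B (1, c)) := by
  rw [inclA_coe, Commute, SemiconjBy, ← map_mul, ← map_mul]
  simp

lemma hom_ext_P {K : Type} [Monoid K] {f g : P C B →* K}
    (hA : ∀ a, f (inclA B a) = g (inclA B a)) (hBC : ∀ x, f (inclBC B x) = g (inclBC B x)) :
    f = g := by
  refine PushoutI.hom_ext_nonempty fun i => ?_
  cases i
  · exact MonoidHom.ext hA
  · exact MonoidHom.ext hBC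

/-- The homomorphism `(b, c) ↦ (c at the trivial coset) * b` from `B × C` to `N ⋊ A`. -/
def semiBC : ↥B × C →* Free C B ⋊[perm B] A where
  toFun x := ⟨ofFree B ((1 : A) : A ⧸ B) x.2, x.1⟩
  map_one' := SemidirectProduct.ext (map_one _) rfl
  map_mul' x y := by
    -- elements of `B` fix the trivial coset
    have h : (x.1 : A) • ((1 : A) : A ⧸ B) = ((1 : A) : A ⧸ B) := by
      rw [MulAction.Quotient.smul_coe, QuotientGroup.eq]
      simp
    refine SemidirectProduct.ext ?_ ?_
    · simp [h]
    · simp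

/-- The homomorphism from the pushout to the semidirect product `N ⋊ A`. -/
def toSemi : P C B →* Free C B ⋊[perm B] A :=
  PushoutI.lift
    (fun i => match i with
      | false => (SemidirectProduct.inr : A →* Free C B ⋊[perm B] A)
      | true => semiBC B)
    ((SemidirectProduct.inr : A →* Free C B ⋊[perm B] A).comp B.subtype)
    (fun i => match i with
      | false => rfl
      | true => MonoidHom.ext fun _ => SemidirectProduct.ext (map_one (ofFree B _)) rfl)

@[simp]
lemma toSemi_inclA (a : A) : toSemi (C := C) B (inclA B a) = SemidirectProduct.inr a :=
  PushoutI.lift_of (φ := pushMaps A C B) _ _ _ (i := false) a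

@[simp]
lemma toSemi_inclBC (x : ↥B × C) : toSemi B (inclBC B x) = semiBC B x :=
  PushoutI.lift_of (φ := pushMaps A C B) _ _ _ (i := true) x

/-- The homomorphism `N → P` conjugating the copy of `C` at a coset by a representative of that
coset. -/
noncomputable def fromFree : Free C B →* P C B :=
  CoprodI.lift fun q : A ⧸ B =>
    (MulAut.conj (inclA B q.out)).toMonoidHom.comp ((inclBC B).comp (MonoidHom.inr B C))

lemma fromFree_of (q : A ⧸ B) (c : C) :
    fromFree B (ofFree B q c) = inclA B q.out * inclBC B (1, c) * (inclA B q.out)⁻¹ :=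
  CoprodI.lift_of _ _

/-- The conjugate defining `fromFree` may be computed with any representative of the coset, since
`B` and `C` commute in the pushout. -/
lemma fromFree_of_mk (a : A) (c : C) :
    fromFree B (ofFree B (a : A ⧸ B) c) = inclA B a * inclBC B (1, c) * (inclA B a)⁻¹ := by
  rw [fromFree_of]
  obtain ⟨b, hb⟩ := QuotientGroup.mk_out_eq_mul B a
  rw [hb, map_mul, mul_assoc (inclA B a), (commute_inclA_inclBC B b c).eq]
  group

/-- Equivariance of `fromFree`: the permutation action becomes conjugation by `A` in `P`. -/
lemma fromFree_perm (a : A) :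
    (fromFree (C := C) B).comp (perm B a).toMonoidHom =
      (MulAut.conj (inclA B a)).toMonoidHom.comp (fromFree B) := by
  refine CoprodI.ext_hom _ _ fun q => MonoidHom.ext fun c => ?_
  change fromFree B (perm B a (ofFree B q c)) =
    inclA B a * fromFree B (ofFree B q c) * (inclA B a)⁻¹
  induction q using QuotientGroup.induction_on with
  | H x =>
    rw [perm_of, MulAction.Quotient.smul_coe, fromFree_of_mk, fromFree_of_mk, smul_eq_mul, map_mul]
    group

lemma toSemi_fromFree (n : Free C B) : toSemi B (fromFree B n) = SemidirectProduct.inl n := by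
  have h : (toSemi B).comp (fromFree (C := C) B) = SemidirectProduct.inl := by
    refine CoprodI.ext_hom _ _ fun q => MonoidHom.ext fun c => ?_
    change toSemi B (fromFree B (ofFree B q c)) = SemidirectProduct.inl (ofFree B q c)
    induction q using QuotientGroup.induction_on with
    | H x =>
      have h1 : semiBC B (1, c) = SemidirectProduct.inl (ofFree B ((1 : A) : A ⧸ B) c) := rfl
      rw [fromFree_of_mk, map_mul, map_mul, map_inv, toSemi_inclA, toSemi_inclBC, h1, ← map_inv,
        ← SemidirectProduct.inl_aut, perm_of, MulAction.Quotient.smul_coe, smul_eq_mul, mul_one]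
  exact DFunLike.congr_fun h n

lemma fromFree_injective : Function.Injective (fromFree (C := C) B) := fun m n h =>
  SemidirectProduct.inl_injective (by rw [← toSemi_fromFree, ← toSemi_fromFree, h])

/-- Every element of the pushout factors through its semidirect product coordinates. -/
lemma fromFree_mul_inclA (x : P C B) :
    fromFree B (toSemi B x).left * inclA B (toSemi B x).right = x := by
  have h : (SemidirectProduct.lift (fromFree B) (inclA B) (fromFree_perm B)).comp (toSemi B) =
      MonoidHom.id (P C B) := by
    refine hom_ext_P B (fun a => by simp) fun ⟨b, c⟩ => ?_
    change SemidirectProduct.lift (fromFree B) (inclA B) (fromFree_perm B) (toSemi B (inclBC B (b, c))) =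
      inclBC B (b, c)
    rw [toSemi_inclBC]
    change fromFree B (ofFree B ((1 : A) : A ⧸ B) c) * inclA B (b : A) = _
    rw [fromFree_of_mk, inclA_coe, map_one, inv_one, one_mul, mul_one, ← map_mul]
    simp
  exact DFunLike.congr_fun h x

end PushSplit

/-- Let `B` be a subgroup of a group `A` and let `C` be a group.  Let
`P = A *_B (B × C)` be the amalgamated free product of `A` and `B × C` over `B`
(the pushout, in the category of groups, of the inclusion `B → A` and of
`b ↦ (b, 1) : B → B × C`).  Then the natural homomorphism `π : P → A` (induced by the
identity of `A` and by `(b, c) ↦ b : B × C → A`) is a split surjection, and its kernel is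
isomorphic to the free product (i.e. the coproduct in the category of groups) of copies of
`C` indexed by the coset space `A/B`.  In particular `P` is a semidirect product of a normal
subgroup isomorphic to the free product of `[A : B]` copies of `C` by a complement
isomorphic to `A`. -/
theorem pushout_split_kernel_coprodI
    (A C : Type) [Group A] [Group C] (B : Subgroup A)
    (π : PushoutI (pushMaps A C B) →* A)
    (hπA : ∀ a : A, π (PushoutI.of (φ := pushMaps A C B) false a) = a)
    (hπBC : ∀ x : ↥B × C, π (PushoutI.of (φ := pushMaps A C B) true x) = (x.1 : A)) :
    Function.Surjective π ∧
    (∃ s : A →* PushoutI (pushMaps A C B), π.comp s = MonoidHom.id A) ∧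
    Nonempty (↥π.ker ≃* Monoid.CoprodI (fun _ : A ⧸ B => C)) := by
  have hs : π.comp (PushSplit.inclA B) = MonoidHom.id A := MonoidHom.ext hπA
  have hN : ∀ n, π (PushSplit.fromFree B n) = 1 := by
    have h : π.comp (PushSplit.fromFree B) = 1 := by
      refine CoprodI.ext_hom _ _ fun q => MonoidHom.ext fun c => ?_
      change π (PushSplit.fromFree B (PushSplit.ofFree B q c)) = 1
      have h1 : π (PushSplit.inclBC B (1, c)) = 1 := hπBC (1, c)
      rw [PushSplit.fromFree_of, map_mul, map_mul, map_inv, h1, mul_one, mul_inv_cancel]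
    exact DFunLike.congr_fun h
  refine ⟨fun a => ⟨_, hπA a⟩, ⟨PushSplit.inclA B, hs⟩, ⟨MulEquiv.symm <| MulEquiv.ofBijective
    ((PushSplit.fromFree B).codRestrict π.ker fun n => MonoidHom.mem_ker.2 (hN n)) ⟨?_, ?_⟩⟩⟩
  · exact fun m n h => PushSplit.fromFree_injective B (congrArg Subtype.val h)
  · rintro ⟨x, hx⟩
    refine ⟨(PushSplit.toSemi B x).left, Subtype.ext ?_⟩
    -- applying `π` to the factorisation of `x` shows that its `A`-coordinate is trivial
    have hr : (PushSplit.toSemi B x).right = 1 := by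
      have h := congrArg π (PushSplit.fromFree_mul_inclA B x)
      rwa [map_mul, hN, one_mul, MonoidHom.mem_ker.1 hx,
        show π (PushSplit.inclA B _) = _ from hπA _] at h
    have h := PushSplit.fromFree_mul_inclA B x
    rwa [hr, map_one, mul_one] at h
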